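/- Suppose n is odd. Then the fixed subring A^G is generated as a ℂ-algebra by the orbit sums of degrees n, 2n, 3n and 4n; that is, A^G equals the ℂ-subalgebra of A generated by the set {O(a,b,c) : a, b, c ≥ 0, a+2b+c ∈ {n, 2n, 3n, 4n}}. (This is the upper bound β(g) ≤ 4n for the action on the down-up algebra A(0,1).) -/

import Mathlib

/-!
Setting: `lam n = exp(2πi/n)` is a primitive `n`-th root of unity in `ℂ`.
`DUAlg` is the graded down-up algebra `A(0,1) = ℂ⟨u,d⟩/(d²u - ud², du² - u²d)`,
with generators `uGen`, `dGen`.  The automorphism `g` (of order `2n`) is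
determined by `g u = d`, `g d = lam n • u`, and generates the cyclic group `G`,
so that the fixed subring `A^G` is `{a | g a = a}`.  The orbit sum is
`orbitSum n a b c = u^a (du)^b d^c + (lam n)^(b+c) • (d^a (ud)^b u^c)`.
-/

noncomputable section

/-- `lam n = exp(2πi/n)`, a primitive `n`-th root of unity. -/
def lam (n : ℕ) : ℂ := Complex.exp (2 * (Real.pi : ℂ) * Complex.I / (n : ℂ))

/-- The defining relations of the down-up algebra `A(0,1)`:
`d²u = ud²` and `du² = u²d` (here `0` plays the role of `u`, `1` of `d`). -/
inductive DownUpRel : FreeAlgebra ℂ (Fin 2) → FreeAlgebra ℂ (Fin 2) → Prop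
  | rel1 : DownUpRel (FreeAlgebra.ι ℂ 1 * FreeAlgebra.ι ℂ 1 * FreeAlgebra.ι ℂ 0)
      (FreeAlgebra.ι ℂ 0 * FreeAlgebra.ι ℂ 1 * FreeAlgebra.ι ℂ 1)
  | rel2 : DownUpRel (FreeAlgebra.ι ℂ 1 * FreeAlgebra.ι ℂ 0 * FreeAlgebra.ι ℂ 0)
      (FreeAlgebra.ι ℂ 0 * FreeAlgebra.ι ℂ 0 * FreeAlgebra.ι ℂ 1)

/-- The graded down-up algebra `A(0,1)`. -/
abbrev DUAlg : Type := RingQuot DownUpRel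

/-- The generator `u` of `A(0,1)`. -/
def uGen : DUAlg := RingQuot.mkAlgHom ℂ DownUpRel (FreeAlgebra.ι ℂ 0)

/-- The generator `d` of `A(0,1)`. -/
def dGen : DUAlg := RingQuot.mkAlgHom ℂ DownUpRel (FreeAlgebra.ι ℂ 1)

/-- Orbit sum `O(a,b,c) = u^a (du)^b d^c + λ^(b+c) d^a (ud)^b u^c`. -/
def orbitSum (n a b c : ℕ) : DUAlg :=
  uGen ^ a * (dGen * uGen) ^ b * dGen ^ c
    + (lam n ^ (b + c)) • (dGen ^ a * (uGen * dGen) ^ b * uGen ^ c)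

/-! ### Relations -/

theorem rel_ddu : dGen * dGen * uGen = uGen * dGen * dGen := by
  have := RingQuot.mkAlgHom_rel ℂ DownUpRel.rel1
  simpa [uGen, dGen] using this

theorem rel_duu : dGen * uGen * uGen = uGen * uGen * dGen := by
  have := RingQuot.mkAlgHom_rel ℂ DownUpRel.rel2
  simpa [uGen, dGen] using this

/-- The degree one part. -/
def W1 : Submodule ℂ DUAlg := Submodule.span ℂ {uGen, dGen}

theorem u_mem : uGen ∈ W1 := Submodule.subset_span (by simp)
theorem d_mem : dGen ∈ W1 := Submodule.subset_span (by simp)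

theorem mul_mem_W {x y : DUAlg} {i j k : ℕ} (hx : x ∈ W1 ^ i) (hy : y ∈ W1 ^ j)
    (h : i + j = k) : x * y ∈ W1 ^ k := by
  rw [← h, pow_add]; exact Submodule.mul_mem_mul hx hy

theorem upow_mem (i : ℕ) : uGen ^ i ∈ W1 ^ i := Submodule.pow_mem_pow _ u_mem i
theorem dpow_mem (i : ℕ) : dGen ^ i ∈ W1 ^ i := Submodule.pow_mem_pow _ d_mem i

theorem ppow_mem (i : ℕ) : (dGen * uGen) ^ i ∈ W1 ^ (2 * i) := by
  rw [pow_mul]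
  refine Submodule.pow_mem_pow _ ?_ i
  rw [pow_two]; exact Submodule.mul_mem_mul d_mem u_mem

theorem qpow_mem (i : ℕ) : (uGen * dGen) ^ i ∈ W1 ^ (2 * i) := by
  rw [pow_mul]
  refine Submodule.pow_mem_pow _ ?_ i
  rw [pow_two]; exact Submodule.mul_mem_mul u_mem d_mem

theorem mono_mem {a b c m : ℕ} (h : a + 2 * b + c = m) :
    uGen ^ a * (dGen * uGen) ^ b * dGen ^ c ∈ W1 ^ m :=
  mul_mem_W (mul_mem_W (upow_mem a) (ppow_mem b) rfl) (dpow_mem c) h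

theorem iSup_W : (⨆ m : ℕ, W1 ^ m) = ⊤ := by
  have hmul : ∀ x y, x ∈ (⨆ m : ℕ, W1 ^ m) → y ∈ (⨆ m : ℕ, W1 ^ m) →
      x * y ∈ (⨆ m : ℕ, W1 ^ m) := by
    intro x y hx hy
    have h := Submodule.mul_mem_mul hx hy
    rw [Submodule.iSup_mul] at h
    refine (show _ ≤ (⨆ m : ℕ, W1 ^ m) from ?_) h
    refine iSup_le fun i => ?_
    rw [Submodule.mul_iSup]
    refine iSup_le fun j => ?_
    rw [← pow_add]
    exact le_iSup (fun m : ℕ => W1 ^ m) (i + j)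
  rw [eq_top_iff]
  rintro x -
  obtain ⟨y, rfl⟩ := RingQuot.mkAlgHom_surjective ℂ DownUpRel x
  induction y using FreeAlgebra.induction with
  | grade0 r =>
    rw [AlgHom.commutes]
    refine (le_iSup (fun m : ℕ => W1 ^ m) 0) ?_
    simp only [pow_zero]
    exact Submodule.algebraMap_mem r
  | grade1 i =>
    refine (le_iSup (fun m : ℕ => W1 ^ m) 1) ?_
    simp only [pow_one]
    fin_cases i
    · exact u_mem
    · exact d_mem
  | mul a b ha hb => rw [map_mul]; exact hmul _ _ ha hb
  | add a b ha hb => rw [map_add]; exact add_mem ha hb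

theorem central_of {x : DUAlg} (hu : Commute x uGen) (hd : Commute x dGen) (y : DUAlg) :
    Commute x y := by
  obtain ⟨y, rfl⟩ := RingQuot.mkAlgHom_surjective ℂ DownUpRel y
  induction y using FreeAlgebra.induction with
  | grade0 r =>
    rw [AlgHom.commutes]
    exact (Algebra.commutes r x).symm
  | grade1 i =>
    fin_cases i
    · exact hu
    · exact hd
  | mul a b ha hb => rw [map_mul]; exact ha.mul_right hb
  | add a b ha hb => rw [map_add]; exact ha.add_right hb

theorem uu_central (y : DUAlg) : Commute (uGen ^ 2) y := by
  refine central_of ((Commute.refl _).pow_left 2) ?_ y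
  rw [pow_two]
  change uGen * uGen * dGen = dGen * (uGen * uGen)
  rw [← mul_assoc, rel_duu]

theorem dd_central (y : DUAlg) : Commute (dGen ^ 2) y := by
  refine central_of ?_ ((Commute.refl _).pow_left 2) y
  rw [pow_two]
  change dGen * dGen * uGen = uGen * (dGen * dGen)
  rw [← mul_assoc, rel_ddu]

theorem zz_central (i j : ℕ) (y : DUAlg) : Commute (uGen ^ (2 * i) * dGen ^ (2 * j)) y := by
  rw [pow_mul, pow_mul]
  exact ((uu_central y).pow_left i).mul_left ((dd_central y).pow_left j)

theorem qp_eq : (uGen * dGen) * (dGen * uGen) = uGen ^ 2 * dGen ^ 2 := by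
  calc (uGen * dGen) * (dGen * uGen) = uGen * (dGen ^ 2 * uGen) := by
        simp only [pow_two, mul_assoc]
    _ = uGen ^ 2 * dGen ^ 2 := by
        rw [(dd_central uGen).eq]; simp only [pow_two, mul_assoc]

theorem pq_eq : (dGen * uGen) * (uGen * dGen) = uGen ^ 2 * dGen ^ 2 := by
  calc (dGen * uGen) * (uGen * dGen) = dGen * (uGen ^ 2 * dGen) := by
        simp only [pow_two, mul_assoc]
    _ = dGen * (dGen * uGen ^ 2) := by rw [(uu_central dGen).eq]
    _ = dGen ^ 2 * uGen ^ 2 := by simp only [pow_two, mul_assoc]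
    _ = uGen ^ 2 * dGen ^ 2 := (dd_central _).eq

theorem qp_comm : Commute (uGen * dGen) (dGen * uGen) := by
  change _ * _ = _ * _
  rw [qp_eq, pq_eq]

/-- The key factorisation `q^n p^(l+t+1) = c * (d^2 q^t p^l)` for `n = 2t+1`. -/
theorem key_factor (t l : ℕ) :
    (uGen * dGen) ^ (2 * t + 1) * (dGen * uGen) ^ (l + t + 1) =
      (uGen ^ (2 * (t + 1)) * dGen ^ (2 * t)) *
        (dGen ^ 2 * (uGen * dGen) ^ t * (dGen * uGen) ^ l) := by
  have h1 : (uGen * dGen) ^ (t + 1) * (dGen * uGen) ^ (t + 1) =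
      uGen ^ (2 * (t + 1)) * dGen ^ (2 * t) * dGen ^ 2 := by
    rw [← qp_comm.mul_pow, qp_eq, (uu_central _).mul_pow, ← pow_mul, ← pow_mul, mul_assoc,
      ← pow_add, Nat.mul_succ 2 t]
  have e1 : 2 * t + 1 = t + (t + 1) := by omega
  have e2 : l + t + 1 = (t + 1) + l := by omega
  have hc : Commute (uGen ^ (2 * (t + 1)) * dGen ^ (2 * t) * dGen ^ 2) ((uGen * dGen) ^ t) := by
    rw [mul_assoc, ← pow_add]
    exact zz_central (t + 1) (t + 1) _
  calc (uGen * dGen) ^ (2 * t + 1) * (dGen * uGen) ^ (l + t + 1)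
      = (uGen * dGen) ^ t * ((uGen * dGen) ^ (t + 1) * (dGen * uGen) ^ (t + 1))
          * (dGen * uGen) ^ l := by
        rw [e1, e2, pow_add _ t, pow_add _ (t + 1) l]; simp only [mul_assoc]
    _ = _ := by
        rw [h1, ← hc.eq]; simp only [mul_assoc]

/-! ### Normal forms -/

theorem d_ppow (b : ℕ) : dGen * (dGen * uGen) ^ b = (uGen * dGen) ^ b * dGen := by
  have : SemiconjBy dGen (dGen * uGen) (uGen * dGen) := by
    change dGen * (dGen * uGen) = uGen * dGen * dGen
    rw [← mul_assoc, rel_ddu]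
  exact (this.pow_right b).eq

theorem qpow_succ (b : ℕ) :
    (uGen * dGen) ^ (b + 1) = uGen * (dGen * uGen) ^ b * dGen := by
  have : SemiconjBy uGen (dGen * uGen) (uGen * dGen) := by
    change uGen * (dGen * uGen) = uGen * dGen * uGen
    rw [← mul_assoc]
  rw [(this.pow_right b).eq, pow_succ]
  simp only [mul_assoc]

/-- Normal monomials of a given degree. -/
def monos (m : ℕ) : Set DUAlg :=
  {x | ∃ a b c : ℕ, a + 2 * b + c = m ∧ x = uGen ^ a * (dGen * uGen) ^ b * dGen ^ c}

theorem d_mul_mono (a b c : ℕ) :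
    dGen * (uGen ^ a * (dGen * uGen) ^ b * dGen ^ c) ∈ monos (a + 2 * b + c + 1) := by
  rcases Nat.even_or_odd' a with ⟨e, rfl | rfl⟩
  · have hc : Commute (uGen ^ (2 * e)) dGen := by
      rw [pow_mul]; exact (uu_central _).pow_left e
    have h1 : dGen * (uGen ^ (2 * e) * (dGen * uGen) ^ b * dGen ^ c)
        = uGen ^ (2 * e) * ((uGen * dGen) ^ b * dGen) * dGen ^ c := by
      rw [← d_ppow]
      simp only [← mul_assoc]
      rw [← hc.eq]
    rw [h1]
    cases b with
    | zero =>
      refine ⟨2 * e, 0, c + 1, by omega, ?_⟩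
      simp only [pow_zero, one_mul, mul_one, pow_succ', mul_assoc]
    | succ b =>
      refine ⟨2 * e + 1, b, c + 2, by omega, ?_⟩
      rw [qpow_succ, pow_succ uGen (2 * e)]
      have : dGen ^ (c + 2) = dGen * dGen * dGen ^ c := by
        rw [add_comm, pow_add, pow_two]
      rw [this]
      simp only [mul_assoc]
  · have hc : Commute (uGen ^ (2 * e)) (dGen * uGen) := by
      rw [pow_mul]; exact (uu_central _).pow_left e
    refine ⟨2 * e, b + 1, c, by omega, ?_⟩
    rw [pow_succ' uGen (2 * e), pow_succ' (dGen * uGen) b]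
    simp only [← mul_assoc]
    rw [mul_assoc (uGen ^ (2 * e)) dGen uGen, hc.eq]

theorem W_le_span (m : ℕ) : W1 ^ m ≤ Submodule.span ℂ (monos m) := by
  induction m with
  | zero =>
    rw [pow_zero, Submodule.one_eq_span, Submodule.span_le]
    rintro x hx
    rw [Set.mem_singleton_iff] at hx
    exact Submodule.subset_span ⟨0, 0, 0, rfl, by simp [hx]⟩
  | succ m ih =>
    rw [pow_succ']
    refine (mul_le_mul' le_rfl ih : W1 * W1 ^ m ≤ _).trans ?_
    rw [W1, Submodule.span_mul_span, Submodule.span_le]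
    rintro _ ⟨x, hx, _, ⟨a, b, c, h, rfl⟩, rfl⟩
    subst h
    apply Submodule.subset_span
    rcases hx with rfl | rfl
    · refine ⟨a + 1, b, c, by omega, ?_⟩
      simp only [pow_succ', mul_assoc]
    · exact d_mul_mono a b c

/-! ### The automorphism -/

section Main

variable {n : ℕ} {g : DUAlg ≃ₐ[ℂ] DUAlg}

theorem lam_prim (hn : n ≠ 0) : IsPrimitiveRoot (lam n) n := Complex.isPrimitiveRoot_exp n hn

theorem g_mem (hgu : g uGen = dGen) (hgd : g dGen = lam n • uGen) {m : ℕ} {x : DUAlg}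
    (hx : x ∈ W1 ^ m) : g x ∈ W1 ^ m := by
  have h1 : W1.map g.toAlgHom.toLinearMap ≤ W1 := by
    rw [W1, Submodule.map_span_le]
    rintro x (rfl | rfl)
    · change g uGen ∈ W1
      rw [hgu]; exact d_mem
    · change g dGen ∈ W1
      rw [hgd]; exact Submodule.smul_mem _ _ u_mem
  have h2 : (W1 ^ m).map g.toAlgHom.toLinearMap ≤ W1 ^ m := by
    rw [Submodule.map_pow]
    exact pow_le_pow_left' h1 m
  exact h2 (Submodule.mem_map_of_mem hx)

theorem g_mono (hgu : g uGen = dGen) (hgd : g dGen = lam n • uGen) (a b c : ℕ) :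
    g (uGen ^ a * (dGen * uGen) ^ b * dGen ^ c)
      = (lam n ^ (b + c)) • (dGen ^ a * (uGen * dGen) ^ b * uGen ^ c) := by
  simp only [map_mul, map_pow, hgu, hgd, smul_mul_assoc, mul_smul_comm, smul_pow, smul_smul]
  rw [← pow_add, add_comm]

theorem gg_eq (hgu : g uGen = dGen) (hgd : g dGen = lam n • uGen) {m : ℕ} {x : DUAlg}
    (hx : x ∈ W1 ^ m) : g (g x) = lam n ^ m • x := by
  induction m generalizing x with
  | zero =>
    rw [pow_zero, Submodule.one_eq_span] at hx
    obtain ⟨r, rfl⟩ := Submodule.mem_span_singleton.1 hx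
    simp
  | succ m ih =>
    rw [pow_succ'] at hx
    induction hx using Submodule.mul_induction_on' with
    | mem_mul_mem y hy z hz =>
      have hy' : g (g y) = lam n • y := by
        rw [W1] at hy
        induction hy using Submodule.span_induction with
        | mem y hy =>
          rcases hy with rfl | rfl
          · rw [hgu, hgd]
          · rw [hgd, map_smul, hgu]
        | zero => simp
        | add a b _ _ ha hb => simp [ha, hb]
        | smul r a _ ha => rw [map_smul, map_smul, ha, smul_comm]
      rw [map_mul, map_mul, hy', ih hz, smul_mul_smul_comm, ← pow_succ']
    | add a _ b _ ha hb => simp [ha, hb]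

theorem gg_id (hn : n ≠ 0) (hgu : g uGen = dGen) (hgd : g dGen = lam n • uGen) {k : ℕ} {x : DUAlg}
    (hx : x ∈ W1 ^ (k * n)) : g (g x) = x := by
  rw [gg_eq hgu hgd hx, mul_comm, pow_mul, (lam_prim hn).pow_eq_one, one_pow, one_smul]

/-- If trace elements below degree `k` lie in `B`, the basic congruence holds. -/
theorem split_mem (hn : n ≠ 0) (hgu : g uGen = dGen) (hgd : g dGen = lam n • uGen)
    (B : Subalgebra ℂ DUAlg) {k : ℕ}
    (ih : ∀ i < k, ∀ x ∈ W1 ^ (i * n), x + g x ∈ B)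
    {i j : ℕ} (hi : 0 < i) (hj : 0 < j) (hk : i + j = k) {x y : DUAlg}
    (hx : x ∈ W1 ^ (i * n)) (hy : y ∈ W1 ^ (j * n)) :
    (x * y + g (x * y)) + (x * g y + g (x * g y)) ∈ B := by
  have h := B.mul_mem (ih i (by omega) x hx) (ih j (by omega) y hy)
  have e : (x * y + g (x * y)) + (x * g y + g (x * g y)) = (x + g x) * (y + g y) := by
    rw [map_mul, map_mul, gg_id hn hgu hgd hy]; noncomm_ring
  rwa [e]

/-- Middle factors may be replaced by their images under `g`. -/
theorem middle_mem (hn : n ≠ 0) (hgu : g uGen = dGen) (hgd : g dGen = lam n • uGen)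
    (B : Subalgebra ℂ DUAlg) {k : ℕ}
    (ih : ∀ i < k, ∀ x ∈ W1 ^ (i * n), x + g x ∈ B)
    {i j l : ℕ} (hi : 0 < i) (hj : 0 < j) (hl : 0 < l) (hk : i + j + l = k) {x y v : DUAlg}
    (hx : x ∈ W1 ^ (i * n)) (hy : y ∈ W1 ^ (j * n)) (hv : v ∈ W1 ^ (l * n)) :
    (x * y * v + g (x * y * v)) - (x * g y * v + g (x * g y * v)) ∈ B := by
  have h1 := split_mem hn hgu hgd B ih (i := i) (j := j + l) hi (by omega) (by omega) hx
    (mul_mem_W hy hv (by ring))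
  have h2 := split_mem hn hgu hgd B ih (i := i + j) (j := l) (by omega) hl (by omega)
    (mul_mem_W hx (g_mem hgu hgd hy) (by ring)) hv
  have h := B.sub_mem h1 h2
  have e : g (y * v) = g y * g v := map_mul g y v
  rw [e] at h
  simp only [← mul_assoc] at h
  convert h using 1
  abel

theorem half_mem (B : Subalgebra ℂ DUAlg) {x : DUAlg} (h : x + x ∈ B) : x ∈ B := by
  have : x = (2⁻¹ : ℂ) • (x + x) := by
    rw [← two_smul ℂ x, smul_smul]; norm_num
  rw [this]; exact B.smul_mem h _

theorem central_mem (hn : n ≠ 0) (hgu : g uGen = dGen) (hgd : g dGen = lam n • uGen)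
    (B : Subalgebra ℂ DUAlg) {k : ℕ}
    (ih : ∀ i < k, ∀ x ∈ W1 ^ (i * n), x + g x ∈ B)
    {z r : DUAlg} (hz : ∀ y, Commute z y) (hzm : z ∈ W1 ^ (2 * n)) {j : ℕ} (hj : 0 < j)
    (hk : 3 + j = k) (hr : r ∈ W1 ^ ((1 + j) * n)) : z * r + g (z * r) ∈ B := by
  rw [add_mul, pow_add] at hr
  have hgz : ∀ y, Commute (g z) y := by
    intro y
    have := (hz (g.symm y)).map g
    simpa using this
  induction hr using Submodule.mul_induction_on' with
  | mem_mul_mem x hx y hy =>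
    have hxy : x * y ∈ W1 ^ ((1 + j) * n) := mul_mem_W hx hy (by ring)
    have h1 := middle_mem hn hgu hgd B ih (i := 1) (j := 2) (l := j) (by omega) (by omega) hj
      (by omega) hx hzm hy
    have h2 := split_mem hn hgu hgd B ih (i := 2) (j := 1 + j) (by omega) (by omega) (by omega)
      (g_mem hgu hgd hzm) hxy
    have e1 : x * z * y = z * (x * y) := by rw [← (hz x).eq, mul_assoc]
    have e2 : x * g z * y = g z * (x * y) := by rw [← (hgz x).eq, mul_assoc]
    rw [e1, e2] at h1
    have e3 : g z * g (x * y) = g (z * (x * y)) := (map_mul g _ _).symm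
    have e4 : g (g (z * (x * y))) = z * (x * y) :=
      gg_id hn hgu hgd (k := 3 + j) (mul_mem_W hzm hxy (by ring))
    rw [e3, e4] at h2
    apply half_mem
    convert B.add_mem h1 h2 using 1
    abel
  | add a _ b _ ha hb =>
    convert B.add_mem ha hb using 1
    rw [mul_add, map_add]; abel

/-- The main inductive step. -/
theorem step_mem (hodd : Odd n) (hgu : g uGen = dGen) (hgd : g dGen = lam n • uGen)
    (B : Subalgebra ℂ DUAlg) {k : ℕ} (hk5 : 5 ≤ k)
    (ih : ∀ i < k, ∀ x ∈ W1 ^ (i * n), x + g x ∈ B)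
    {a b c : ℕ} (h : a + 2 * b + c = k * n) :
    uGen ^ a * (dGen * uGen) ^ b * dGen ^ c
      + g (uGen ^ a * (dGen * uGen) ^ b * dGen ^ c) ∈ B := by
  obtain ⟨t, rfl⟩ := hodd
  have hn : 2 * t + 1 ≠ 0 := by omega
  obtain ⟨κ, rfl⟩ := Nat.exists_eq_add_of_le hk5
  by_cases hac : 2 * t + 1 ≤ a / 2 + c / 2
  · obtain ⟨i, j, hij, hi, hj⟩ : ∃ i j, i + j = 2 * t + 1 ∧ i ≤ a / 2 ∧ j ≤ c / 2 := by
      by_cases h' : 2 * t + 1 ≤ a / 2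
      · exact ⟨2 * t + 1, 0, by omega, by omega, by omega⟩
      · exact ⟨a / 2, 2 * t + 1 - a / 2, by omega, by omega, by omega⟩
    obtain ⟨a', rfl⟩ : ∃ a', a = 2 * i + a' := ⟨a - 2 * i, by omega⟩
    obtain ⟨c', rfl⟩ : ∃ c', c = 2 * j + c' := ⟨c - 2 * j, by omega⟩
    have e : uGen ^ (2 * i + a') * (dGen * uGen) ^ b * dGen ^ (2 * j + c')
        = (uGen ^ (2 * i) * dGen ^ (2 * j)) * (uGen ^ a' * (dGen * uGen) ^ b * dGen ^ c') := by
      have hc : ∀ y, Commute (dGen ^ (2 * j)) y := fun y => by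
        rw [pow_mul]; exact (dd_central y).pow_left j
      rw [mul_assoc (uGen ^ (2 * i)), ← mul_assoc (dGen ^ (2 * j)),
        (hc (uGen ^ a' * (dGen * uGen) ^ b)).eq, pow_add, pow_add]
      simp only [mul_assoc]
    rw [e]
    refine central_mem hn hgu hgd B ih (zz_central i j)
      (mul_mem_W (upow_mem _) (dpow_mem _) (by omega)) (j := κ + 2) (by omega) (by omega)
      (mono_mem ?_)
    have : (5 + κ) * (2 * t + 1) = (1 + (κ + 2)) * (2 * t + 1) + 2 * (2 * t + 1) := by ring
    omega
  · push Not at hac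
    obtain ⟨α, a0, rfl, ha0⟩ : ∃ α a0, a = 2 * α + a0 ∧ a0 < 2 := ⟨a / 2, a % 2, by omega, by omega⟩
    obtain ⟨γ, c0, rfl, hc0⟩ : ∃ γ c0, c = 2 * γ + c0 ∧ c0 < 2 := ⟨c / 2, c % 2, by omega, by omega⟩
    have hαγ : α + γ ≤ 2 * t := by omega
    have e5 : (5 + κ) * (2 * t + 1) = 5 * (2 * t + 1) + κ * (2 * t + 1) := by ring
    have e3 : (1 + (κ + 2)) * (2 * t + 1) = 3 * (2 * t + 1) + κ * (2 * t + 1) := by ring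
    have e2 : (2 + κ) * (2 * t + 1) = 2 * (2 * t + 1) + κ * (2 * t + 1) := by ring
    have e1 : (1 + κ) * (2 * t + 1) = 1 * (2 * t + 1) + κ * (2 * t + 1) := by ring
    set K := κ * (2 * t + 1) with hK
    have hz := zz_central α γ
    set z : DUAlg := uGen ^ (2 * α) * dGen ^ (2 * γ) with hzdef
    have hzm : z ∈ W1 ^ (2 * α + 2 * γ) := mul_mem_W (upow_mem _) (dpow_mem _) rfl
    have hc : ∀ y, Commute (dGen ^ (2 * γ)) y := fun y => by
      rw [pow_mul]; exact (dd_central y).pow_left γ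
    have e : uGen ^ (2 * α + a0) * (dGen * uGen) ^ b * dGen ^ (2 * γ + c0)
        = z * (uGen ^ a0 * (dGen * uGen) ^ b * dGen ^ c0) := by
      rw [hzdef, mul_assoc (uGen ^ (2 * α)), ← mul_assoc (dGen ^ (2 * γ)),
        (hc (uGen ^ a0 * (dGen * uGen) ^ b)).eq, pow_add, pow_add]
      simp only [mul_assoc]
    rw [e]
    have hgp : g ((dGen * uGen) ^ (2 * t + 1)) = (uGen * dGen) ^ (2 * t + 1) := by
      rw [map_pow, map_mul, hgu, hgd, smul_mul_assoc, smul_pow, (lam_prim hn).pow_eq_one,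
        one_smul]
    obtain ⟨l, hl⟩ : ∃ l, b = 2 * t + 1 + (l + t + 1) := ⟨b - (3 * t + 2), by omega⟩
    -- the replaced element lies in `B`
    have hfin : z * (uGen ^ a0 * ((uGen * dGen) ^ (2 * t + 1) * (dGen * uGen) ^ (l + t + 1))
          * dGen ^ c0)
        + g (z * (uGen ^ a0 * ((uGen * dGen) ^ (2 * t + 1) * (dGen * uGen) ^ (l + t + 1))
          * dGen ^ c0)) ∈ B := by
      rw [key_factor]
      have hy := zz_central (t + 1) t
      set y : DUAlg := uGen ^ (2 * (t + 1)) * dGen ^ (2 * t) with hydef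
      set F : DUAlg := dGen ^ 2 * (uGen * dGen) ^ t * (dGen * uGen) ^ l with hF
      have hFm : F ∈ W1 ^ (2 + 2 * t + 2 * l) :=
        mul_mem_W (mul_mem_W (dpow_mem _) (qpow_mem _) rfl) (ppow_mem _) rfl
      have e' : z * (uGen ^ a0 * (y * F) * dGen ^ c0) = y * (z * (uGen ^ a0 * F * dGen ^ c0)) := by
        rw [← mul_assoc (uGen ^ a0) y F, ← (hy (uGen ^ a0)).eq, ← mul_assoc y z, (hy z).eq]
        simp only [mul_assoc]
      rw [e']
      refine central_mem hn hgu hgd B ih hy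
        (mul_mem_W (upow_mem _) (dpow_mem _) (by omega)) (j := κ + 2) (by omega) (by omega) ?_
      refine mul_mem_W hzm (mul_mem_W (mul_mem_W (upow_mem a0) hFm rfl) (dpow_mem c0) rfl) ?_
      omega
    have hpq : ∀ i j, (dGen * uGen) ^ i * (uGen * dGen) ^ j
        = (uGen * dGen) ^ j * (dGen * uGen) ^ i := fun i j => ((qp_comm.pow_pow j i).eq).symm
    have hym : (dGen * uGen) ^ (2 * t + 1) ∈ W1 ^ (2 * (2 * t + 1)) := ppow_mem _
    obtain rfl | rfl : a0 = 0 ∨ a0 = 1 := by omega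
    · obtain ⟨i, hi⟩ : ∃ i, α + γ + i = 2 * t + 1 := ⟨2 * t + 1 - (α + γ), by omega⟩
      obtain ⟨j, hj⟩ : ∃ j, i + j = l + t + 1 := ⟨l + t + 1 - i, by omega⟩
      have hx : z * (dGen * uGen) ^ i ∈ W1 ^ (2 * (2 * t + 1)) :=
        mul_mem_W hzm (ppow_mem i) (by omega)
      have hv : (dGen * uGen) ^ j * dGen ^ c0 ∈ W1 ^ ((1 + κ) * (2 * t + 1)) :=
        mul_mem_W (ppow_mem j) (dpow_mem c0) (by omega)
      have hm := middle_mem hn hgu hgd B ih (i := 2) (j := 2) (l := 1 + κ) (by omega) (by omega)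
        (by omega) (by omega) hx hym hv
      rw [hgp] at hm
      have f1 : z * (dGen * uGen) ^ i * (dGen * uGen) ^ (2 * t + 1) * ((dGen * uGen) ^ j * dGen ^ c0)
          = z * (uGen ^ 0 * (dGen * uGen) ^ b * dGen ^ c0) := by
        have : b = i + (2 * t + 1) + j := by omega
        rw [this, pow_add _ _ j, pow_add _ i, pow_zero, one_mul]
        simp only [mul_assoc]
      have f2 : z * (dGen * uGen) ^ i * (uGen * dGen) ^ (2 * t + 1) * ((dGen * uGen) ^ j * dGen ^ c0)
          = z * (uGen ^ 0 * ((uGen * dGen) ^ (2 * t + 1) * (dGen * uGen) ^ (l + t + 1))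
            * dGen ^ c0) := by
        rw [mul_assoc z, hpq, ← hj, pow_add _ i j, pow_zero, one_mul]
        simp only [mul_assoc]
      rw [f1, f2] at hm
      have := B.add_mem hm hfin
      rwa [sub_add_cancel] at this
    · obtain ⟨j, hj⟩ : ∃ j, t + j = l + t + 1 := ⟨l + 1, by omega⟩
      have hx : uGen * (dGen * uGen) ^ t ∈ W1 ^ (1 * (2 * t + 1)) :=
        mul_mem_W (i := 1) (by simpa using u_mem) (ppow_mem t) (by omega)
      have hv : (dGen * uGen) ^ j * dGen ^ c0 * z ∈ W1 ^ ((2 + κ) * (2 * t + 1)) :=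
        mul_mem_W (mul_mem_W (ppow_mem j) (dpow_mem c0) rfl) hzm (by omega)
      have hm := middle_mem hn hgu hgd B ih (i := 1) (j := 2) (l := 2 + κ) (by omega) (by omega)
        (by omega) (by omega) hx hym hv
      rw [hgp] at hm
      have f1 : uGen * (dGen * uGen) ^ t * (dGen * uGen) ^ (2 * t + 1)
            * ((dGen * uGen) ^ j * dGen ^ c0 * z)
          = z * (uGen ^ 1 * (dGen * uGen) ^ b * dGen ^ c0) := by
        have : b = t + (2 * t + 1) + j := by omega
        rw [(hz _).eq, this, pow_add _ _ j, pow_add _ t, pow_one]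
        simp only [mul_assoc]
      have f2 : uGen * (dGen * uGen) ^ t * (uGen * dGen) ^ (2 * t + 1)
            * ((dGen * uGen) ^ j * dGen ^ c0 * z)
          = z * (uGen ^ 1 * ((uGen * dGen) ^ (2 * t + 1) * (dGen * uGen) ^ (l + t + 1))
            * dGen ^ c0) := by
        rw [(hz _).eq, mul_assoc uGen, hpq, ← hj, pow_add _ t j, pow_one]
        simp only [mul_assoc]
      rw [f1, f2] at hm
      have := B.add_mem hm hfin
      rwa [sub_add_cancel] at this

theorem trace_of_monos (B : Subalgebra ℂ DUAlg) {m : ℕ}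
    (h : ∀ a b c : ℕ, a + 2 * b + c = m → uGen ^ a * (dGen * uGen) ^ b * dGen ^ c
      + g (uGen ^ a * (dGen * uGen) ^ b * dGen ^ c) ∈ B) (x : DUAlg) (hx : x ∈ W1 ^ m) :
    x + g x ∈ B := by
  have hx' := W_le_span m hx
  clear hx
  induction hx' using Submodule.span_induction with
  | mem y hy =>
    obtain ⟨a, b, c, habc, rfl⟩ := hy
    exact h a b c habc
  | zero => simp
  | add a b _ _ ha hb =>
    convert B.add_mem ha hb using 1
    rw [map_add]; abel
  | smul r a _ ha =>
    rw [map_smul, ← smul_add]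
    exact B.smul_mem ha r

theorem orbitSum_eq (hgu : g uGen = dGen) (hgd : g dGen = lam n • uGen) (a b c : ℕ) :
    orbitSum n a b c = uGen ^ a * (dGen * uGen) ^ b * dGen ^ c
      + g (uGen ^ a * (dGen * uGen) ^ b * dGen ^ c) := by
  rw [g_mono hgu hgd, orbitSum]

theorem trace_mem (hodd : Odd n) (hgu : g uGen = dGen) (hgd : g dGen = lam n • uGen)
    (B : Subalgebra ℂ DUAlg)
    (hB : ∀ a b c : ℕ, (a + 2 * b + c = n ∨ a + 2 * b + c = 2 * n ∨
           a + 2 * b + c = 3 * n ∨ a + 2 * b + c = 4 * n) → orbitSum n a b c ∈ B) (k : ℕ) :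
    ∀ x ∈ W1 ^ (k * n), x + g x ∈ B := by
  induction k using Nat.strong_induction_on with
  | _ k ih =>
    apply trace_of_monos B
    intro a b c h
    by_cases hk5 : 5 ≤ k
    · exact step_mem hodd hgu hgd B hk5 ih h
    · by_cases hk0 : k = 0
      · subst hk0
        obtain ⟨rfl, rfl, rfl⟩ : a = 0 ∧ b = 0 ∧ c = 0 := by omega
        simpa using B.add_mem B.one_mem B.one_mem
      · rw [← orbitSum_eq hgu hgd]
        apply hB
        have : k = 1 ∨ k = 2 ∨ k = 3 ∨ k = 4 := by omega
        rcases this with rfl | rfl | rfl | rfl <;> omega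

theorem iter_eq (hgu : g uGen = dGen) (hgd : g dGen = lam n • uGen) {m : ℕ} {x : DUAlg}
    (hx : x ∈ W1 ^ m) (i : ℕ) :
    ((g.toAlgHom.toLinearMap ∘ₗ g.toAlgHom.toLinearMap) ^ i) x = (lam n ^ m) ^ i • x := by
  induction i with
  | zero => simp
  | succ i ih =>
    rw [pow_succ', Module.End.mul_apply, ih, map_smul, pow_succ, mul_smul]
    congr 1
    exact gg_eq hgu hgd hx

theorem avg_mem (hodd : Odd n) (hgu : g uGen = dGen) (hgd : g dGen = lam n • uGen)
    (B : Subalgebra ℂ DUAlg)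
    (hB : ∀ a b c : ℕ, (a + 2 * b + c = n ∨ a + 2 * b + c = 2 * n ∨
           a + 2 * b + c = 3 * n ∨ a + 2 * b + c = 4 * n) → orbitSum n a b c ∈ B) (x : DUAlg) :
    ∑ i ∈ Finset.range n,
      ((g.toAlgHom.toLinearMap ∘ₗ g.toAlgHom.toLinearMap) ^ i) (x + g x) ∈ B := by
  have hn : n ≠ 0 := by rintro rfl; simp at hodd
  have hx : x ∈ ⨆ m : ℕ, W1 ^ m := by rw [iSup_W]; trivial
  induction hx using Submodule.iSup_induction' with
  | mem m x hx =>
    have hT : x + g x ∈ W1 ^ m := add_mem hx (g_mem hgu hgd hx)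
    simp only [iter_eq hgu hgd hT]
    rw [← Finset.sum_smul]
    by_cases hm : n ∣ m
    · obtain ⟨k, rfl⟩ := hm
      rw [mul_comm] at hx
      exact B.smul_mem (trace_mem hodd hgu hgd B hB k x hx) _
    · have hne : lam n ^ m ≠ 1 := fun h => hm ((lam_prim hn).dvd_of_pow_eq_one m h)
      have : ∑ i ∈ Finset.range n, (lam n ^ m) ^ i = 0 := by
        rw [geom_sum_eq hne, ← pow_mul, mul_comm, pow_mul, (lam_prim hn).pow_eq_one]
        simp
      rw [this, zero_smul]
      exact B.zero_mem
  | zero => simp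
  | add a b _ _ ha hb =>
    convert B.add_mem ha hb using 1
    rw [← Finset.sum_add_distrib]
    refine Finset.sum_congr rfl fun i _ => ?_
    rw [← map_add, map_add g]
    congr 1
    abel

end Main

/-- If `n` is odd then the fixed subring `A^G` of the down-up algebra `A(0,1)`
is generated as a `ℂ`-algebra by the orbit sums of degrees `n`, `2n`, `3n`, `4n`. -/
theorem fixed_eq_adjoin_four_n_of_odd (n : ℕ) (hodd : Odd n)
    (g : DUAlg ≃ₐ[ℂ] DUAlg) (hgu : g uGen = dGen) (hgd : g dGen = lam n • uGen) :
    {x : DUAlg | g x = x} =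
      ↑(Algebra.adjoin ℂ
        {x : DUAlg | ∃ a b c : ℕ,
          (a + 2 * b + c = n ∨ a + 2 * b + c = 2 * n ∨
           a + 2 * b + c = 3 * n ∨ a + 2 * b + c = 4 * n) ∧ x = orbitSum n a b c}) := by
  have hn : n ≠ 0 := by rintro rfl; simp at hodd
  apply Set.Subset.antisymm
  · intro x hx
    have hx : g x = x := hx
    have h := avg_mem hodd hgu hgd (Algebra.adjoin ℂ
        {x : DUAlg | ∃ a b c : ℕ,
          (a + 2 * b + c = n ∨ a + 2 * b + c = 2 * n ∨
           a + 2 * b + c = 3 * n ∨ a + 2 * b + c = 4 * n) ∧ x = orbitSum n a b c})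
      (fun a b c h => Algebra.subset_adjoin ⟨a, b, c, h, rfl⟩) x
    have hit : ∀ i : ℕ, ((g.toAlgHom.toLinearMap ∘ₗ g.toAlgHom.toLinearMap) ^ i) (x + g x)
        = x + x := by
      intro i
      induction i with
      | zero => simp [hx]
      | succ i ih =>
        rw [pow_succ', Module.End.mul_apply, ih]
        change g (g (x + x)) = x + x
        rw [map_add, map_add, hx, hx]
    simp only [hit, Finset.sum_const, Finset.card_range] at h
    rw [← Nat.cast_smul_eq_nsmul ℂ] at h
    have h2 := Subalgebra.smul_mem _ h ((n : ℂ)⁻¹)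
    rw [smul_smul, inv_mul_cancel₀ (Nat.cast_ne_zero.2 hn), one_smul] at h2
    exact half_mem _ h2
  · have hle : Algebra.adjoin ℂ
        {x : DUAlg | ∃ a b c : ℕ,
          (a + 2 * b + c = n ∨ a + 2 * b + c = 2 * n ∨
           a + 2 * b + c = 3 * n ∨ a + 2 * b + c = 4 * n) ∧ x = orbitSum n a b c}
        ≤ AlgHom.equalizer g.toAlgHom (AlgHom.id ℂ DUAlg) := by
      rw [Algebra.adjoin_le_iff]
      rintro _ ⟨a, b, c, h, rfl⟩
      change g (orbitSum n a b c) = orbitSum n a b c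
      obtain ⟨k, hk⟩ : ∃ k, a + 2 * b + c = k * n := by
        rcases h with h | h | h | h
        · exact ⟨1, by omega⟩
        · exact ⟨2, h⟩
        · exact ⟨3, h⟩
        · exact ⟨4, h⟩
      rw [orbitSum_eq hgu hgd, map_add, gg_id hn hgu hgd (mono_mem hk), add_comm]
    intro x hx
    exact hle hx
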